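/- Let (E,d) be a metric space, δ ∈ (0,1) and p ∈ (1,∞) with δ > 1/p. Then ‖f‖_{\tilde V^{δ,p}} ≤ ‖f‖_{\hat N^{δ,p}} would follow from the super-additivity of ‖f‖_{\hat N^{δ,p};[s,t]}^p in (s,t) together with the estimate ‖f‖_{(1/δ)-var;[u,v]} ≤ C ‖f‖_{\hat N^{δ,p};[u,v]} |v-u|^{δ-1/p}; prove that for continuous f : [0,T] → E, the mixed Hölder-variation seminorm is bounded by the refined Nikolskii seminorm: ‖f‖_{\tilde V^{δ,p}} ≤ C · ‖f‖_{\hat N^{δ,p}} for some constant C = C(δ,p). -/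

import Mathlib

/-!
The heart of the matter is the Hölder estimate
`edist (f s) (f t) ≤ C * nikNorm f δ p s t * (t - s) ^ (δ - 1 / p)` for `f` continuous on `[s, t]`
(`edist_le_nikNorm`). To obtain it, let `B h` be the `L^p` norm of `r ↦ edist (f r) (f s)` on
`(s, s + h]`. Splitting `(s, s + 2h]` into `(s, s + h]` and its translate by `h`, Minkowski's
inequality gives `B (2h) ≤ 2 ^ (1 / p) * (B h + nikNorm f δ p s t * h ^ δ)`. Iterating over
`h = (t - s) / 2 ^ n` yields a geometric series of ratio `2 ^ (-(δ - 1 / p)) < 1`, and the remainder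
`2 ^ (n / p) * B ((t - s) / 2 ^ n)` vanishes by continuity of `f` at `s` (`dyadic_iteration`).
The same holds at the endpoint `t`, and the triangle inequality in `L^p (s, t)` applied to the
constant `edist (f s) (f t)` combines the two bounds.

Summing the Hölder estimate over a partition and applying Hölder's inequality with the exponents
`δ p` and its conjugate gives `qVar f (1 / δ) s t ^ p ≤ C ^ p * W s t * (t - s) ^ (δ p - 1)`
(`qVar_rpow_le`), where `W s t`, called `nikHatPow`, is the `p`-th power of `nikHatNorm`.
As `W` is super-additive by concatenation of partitions, summing over a partition concludes.
-/

open scoped ENNReal NNReal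
open MeasureTheory

/-- `u 0, u 1, ..., u n` are the points of a partition of `[s,t]`. -/
def IsPart (s t : ℝ) (n : ℕ) (u : ℕ → ℝ) : Prop :=
  u 0 = s ∧ u n = t ∧ ∀ i < n, u i < u (i + 1)

/-- Riesz-type sum of `f` along a partition, with parameters `δ, p`. -/
noncomputable def rieszSum {E : Type*} [PseudoEMetricSpace E] (f : ℝ → E) (δ p : ℝ)
    (n : ℕ) (u : ℕ → ℝ) : ℝ≥0∞ :=
  ∑ i ∈ Finset.range n,
    edist (f (u i)) (f (u (i + 1))) ^ p / ENNReal.ofReal (u (i + 1) - u i) ^ (δ * p - 1)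

/-- Riesz type variation seminorm `‖f‖_{V^{δ,p};[s,t]}`. -/
noncomputable def VNorm {E : Type*} [PseudoEMetricSpace E] (f : ℝ → E) (δ p : ℝ)
    (s t : ℝ) : ℝ≥0∞ :=
  (⨆ n, ⨆ u, ⨆ _ : IsPart s t n u, rieszSum f δ p n u) ^ (1 / p)

/-- `q`-variation seminorm `‖f‖_{q-var;[s,t]}`. -/
noncomputable def qVar {E : Type*} [PseudoEMetricSpace E] (f : ℝ → E) (q : ℝ)
    (s t : ℝ) : ℝ≥0∞ :=
  (⨆ n, ⨆ u, ⨆ _ : IsPart s t n u,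
    ∑ i ∈ Finset.range n, edist (f (u i)) (f (u (i + 1))) ^ q) ^ (1 / q)

/-- `δ`-Hölder seminorm on `[s,t]`, i.e. `‖f‖_{V^{δ,∞};[s,t]}`. -/
noncomputable def holNorm {E : Type*} [PseudoEMetricSpace E] (f : ℝ → E) (δ : ℝ)
    (s t : ℝ) : ℝ≥0∞ :=
  ⨆ u, ⨆ v, ⨆ _ : s ≤ u ∧ u < v ∧ v ≤ t,
    edist (f u) (f v) / ENNReal.ofReal (v - u) ^ δ

/-- Nikolskii seminorm `‖f‖_{N^{δ,p};[s,t]}`. -/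
noncomputable def nikNorm {E : Type*} [PseudoEMetricSpace E] (f : ℝ → E) (δ p : ℝ)
    (s t : ℝ) : ℝ≥0∞ :=
  ⨆ h : ℝ, ⨆ _ : 0 < h ∧ h ≤ t - s,
    ENNReal.ofReal h ^ (-δ) *
      (∫⁻ r in Set.Ioc s (t - h), edist (f r) (f (r + h)) ^ p) ^ (1 / p)

/-- Refined Nikolskii seminorm `‖f‖_{\hat N^{δ,p};[s,t]}`. -/
noncomputable def nikHatNorm {E : Type*} [PseudoEMetricSpace E] (f : ℝ → E) (δ p : ℝ)
    (s t : ℝ) : ℝ≥0∞ :=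
  (⨆ n, ⨆ u, ⨆ _ : IsPart s t n u,
    ∑ i ∈ Finset.range n, nikNorm f δ p (u i) (u (i + 1)) ^ p) ^ (1 / p)

/-- Mixed Hölder-variation seminorm `‖f‖_{\tilde V^{δ,p};[s,t]}`. -/
noncomputable def tildeVNorm {E : Type*} [PseudoEMetricSpace E] (f : ℝ → E) (δ p : ℝ)
    (s t : ℝ) : ℝ≥0∞ :=
  (⨆ n, ⨆ u, ⨆ _ : IsPart s t n u,
    ∑ i ∈ Finset.range n,
      qVar f (1 / δ) (u i) (u (i + 1)) ^ p
        / ENNReal.ofReal (u (i + 1) - u i) ^ (δ * p - 1)) ^ (1 / p)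

/-- Fractional Sobolev (Sobolev–Slobodeckij) seminorm `‖f‖_{W^{δ,p};[s,t]}`. -/
noncomputable def sobNorm {E : Type*} [PseudoEMetricSpace E] (f : ℝ → E) (δ p : ℝ)
    (s t : ℝ) : ℝ≥0∞ :=
  (∫⁻ v in Set.Ioc s t, ∫⁻ u in Set.Ioc s t,
    edist (f u) (f v) ^ p / ENNReal.ofReal |v - u| ^ (1 + δ * p)) ^ (1 / p)

/-! ### The Hölder estimate -/

/-- The factor `2 ^ (n / p)` collected over `n` doublings, against the gain `2 ^ (-n δ)` from the
smaller increment, leaves the `n`-th term of a geometric sequence of ratio `2 ^ (-(δ - 1 / p))`. -/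
lemma dyadic_scale (δ p : ℝ) (hδ : 0 ≤ δ) {L : ℝ} (hL : 0 < L) (n : ℕ) :
    ((2 : ℝ≥0∞) ^ (1 / p)) ^ n * ENNReal.ofReal (L / 2 ^ n) ^ δ
      = ENNReal.ofReal L ^ δ * ((2 : ℝ≥0∞) ^ (-(δ - 1 / p))) ^ n := by
  have h2 : ENNReal.ofReal (L / 2 ^ n) = ENNReal.ofReal L * (2 : ℝ≥0∞) ^ (-(n : ℝ)) := by
    rw [div_eq_mul_inv, ENNReal.ofReal_mul hL.le, ENNReal.rpow_neg, ENNReal.rpow_natCast,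
      ENNReal.ofReal_inv_of_pos (by positivity), ENNReal.ofReal_pow (by norm_num)]
    norm_num
  rw [h2, ENNReal.mul_rpow_of_nonneg _ _ hδ, ← ENNReal.rpow_mul, ← ENNReal.rpow_natCast,
    ← ENNReal.rpow_natCast, ← ENNReal.rpow_mul, ← ENNReal.rpow_mul, mul_left_comm,
    ← ENNReal.rpow_add _ _ (by norm_num) (by norm_num)]
  congr 2
  ring

/-- The sum of the geometric series produced by the dyadic iteration. It is finite exactly when
`1 / p < δ`. -/
noncomputable def dyadicConst (δ p : ℝ) : ℝ≥0∞ :=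
  ∑' k : ℕ, ((2 : ℝ≥0∞) ^ (-(δ - 1 / p))) ^ (k + 1)

lemma dyadicConst_ne_top {δ p : ℝ} (h : 1 / p < δ) : dyadicConst δ p ≠ ⊤ := by
  have hx : (2 : ℝ≥0∞) ^ (-(δ - 1 / p)) < 1 :=
    ENNReal.rpow_lt_one_of_one_lt_of_neg (by norm_num) (by linarith)
  unfold dyadicConst
  simp_rw [pow_succ]
  rw [ENNReal.tsum_mul_right, ENNReal.tsum_geometric]
  refine ENNReal.mul_ne_top (ENNReal.inv_ne_top.2 ?_) (hx.trans ENNReal.one_lt_top).ne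
  exact (tsub_pos_of_lt hx).ne'

/-- `B h` stands for the `L^p` norm, over an interval of length `h` with endpoint `x`, of the
distance to the value at `x`: `step` is the doubling estimate and `small` is continuity at `x`. -/
lemma dyadic_iteration {δ p : ℝ} (hp : 0 < p) (hδ : 0 ≤ δ) (B : ℝ → ℝ≥0∞) (K : ℝ≥0∞)
    {L : ℝ} (hL : 0 < L)
    (step : ∀ h, 0 < h → 2 * h ≤ L →
      B (2 * h) ≤ 2 ^ (1 / p) * (B h + K * ENNReal.ofReal h ^ δ))
    (small : ∀ ε : ℝ≥0∞, 0 < ε → ∃ η > 0, ∀ h, 0 < h → h < η →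
      B h ≤ ε * ENNReal.ofReal h ^ (1 / p)) :
    B L ≤ K * ENNReal.ofReal L ^ δ * dyadicConst δ p := by
  have iter : ∀ n : ℕ, B L ≤ ((2 : ℝ≥0∞) ^ (1 / p)) ^ n * B (L / 2 ^ n)
      + K * ENNReal.ofReal L ^ δ *
        ∑ k ∈ Finset.range n, ((2 : ℝ≥0∞) ^ (-(δ - 1 / p))) ^ (k + 1) := by
    intro n
    induction n with
    | zero => simp
    | succ n ih =>
      have hs := step (L / 2 ^ (n + 1)) (by positivity) (by
        rw [pow_succ, ← mul_div_assoc, mul_comm (2 : ℝ) L, mul_div_mul_right _ _ two_ne_zero]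
        exact div_le_self hL.le (one_le_pow₀ (by norm_num)))
      have he : 2 * (L / 2 ^ (n + 1)) = L / 2 ^ n := by
        rw [pow_succ]; field_simp
      rw [he] at hs
      refine ih.trans ?_
      rw [Finset.sum_range_succ, mul_add,
        mul_assoc K _ (((2 : ℝ≥0∞) ^ (-(δ - 1 / p))) ^ (n + 1)),
        ← dyadic_scale δ p hδ hL (n + 1)]
      calc _ ≤ ((2 : ℝ≥0∞) ^ (1 / p)) ^ n * (2 ^ (1 / p) *
            (B (L / 2 ^ (n + 1)) + K * ENNReal.ofReal (L / 2 ^ (n + 1)) ^ δ)) + _ := by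
            gcongr
        _ = _ := by ring
  have hLp0 : ENNReal.ofReal L ^ (1 / p) ≠ 0 := by
    simp [ENNReal.rpow_eq_zero_iff, not_le.2 hL]
  have hLpt : ENNReal.ofReal L ^ (1 / p) ≠ ⊤ := by
    exact ENNReal.rpow_ne_top_of_nonneg (by positivity) ENNReal.ofReal_ne_top
  refine ENNReal.le_of_forall_pos_le_add fun ε hε _ => ?_
  -- The remainder is `2 ^ (n / p) * (ε / L ^ (1 / p)) * (L / 2 ^ n) ^ (1 / p) = ε`.
  obtain ⟨η, hη, hB⟩ := small (ε / ENNReal.ofReal L ^ (1 / p))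
    (ENNReal.div_pos (by simpa using hε.ne') hLpt)
  obtain ⟨n, hn⟩ := exists_pow_lt_of_lt_one (show 0 < η / L by positivity)
    (show (1 / 2 : ℝ) < 1 by norm_num)
  have hsm : L / 2 ^ n < η := by
    rw [lt_div_iff₀ hL] at hn
    calc L / 2 ^ n = (1 / 2) ^ n * L := by
          rw [one_div, inv_pow]; ring
      _ < η := hn
  have h1 := hB (L / 2 ^ n) (by positivity) hsm
  have h2 := dyadic_scale (1 / p) p (by positivity) hL n
  refine (iter n).trans ?_
  rw [add_comm]
  gcongr
  · exact ENNReal.sum_le_tsum _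
  · calc _ ≤ ((2 : ℝ≥0∞) ^ (1 / p)) ^ n *
          (ε / ENNReal.ofReal L ^ (1 / p) * ENNReal.ofReal (L / 2 ^ n) ^ (1 / p)) := by gcongr
      _ = ε / ENNReal.ofReal L ^ (1 / p) *
          (((2 : ℝ≥0∞) ^ (1 / p)) ^ n * ENNReal.ofReal (L / 2 ^ n) ^ (1 / p)) := by ring
      _ = ε := by
        rw [h2, sub_self, neg_zero, ENNReal.rpow_zero, one_pow, mul_one,
          ENNReal.div_mul_cancel hLp0 hLpt]

/-- If `g₂ ≤ g₁ + g₃`, then `g₁` and `g₂`, put side by side on two copies of `μ`, have `L^p` norm at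
most `2 ^ (1 / p) (‖g₁‖ + ‖g₃‖)`. -/
lemma minkowski_two {p : ℝ} (hp : 1 ≤ p) {μ : Measure ℝ} {g₁ g₂ g₃ : ℝ → ℝ≥0∞}
    (m₁ : AEMeasurable g₁ μ) (m₃ : AEMeasurable g₃ μ) (h : ∀ r, g₂ r ≤ g₁ r + g₃ r) :
    ((∫⁻ r, g₁ r ^ p ∂μ) + ∫⁻ r, g₂ r ^ p ∂μ) ^ (1 / p)
      ≤ 2 ^ (1 / p) * ((∫⁻ r, g₁ r ^ p ∂μ) ^ (1 / p) + (∫⁻ r, g₃ r ^ p ∂μ) ^ (1 / p)) := by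
  have hp0 : 0 < p := by linarith
  set S := (∫⁻ r, g₁ r ^ p ∂μ) ^ (1 / p) + (∫⁻ r, g₃ r ^ p ∂μ) ^ (1 / p) with hS
  have h1 : ∫⁻ r, g₁ r ^ p ∂μ ≤ S ^ p := by
    calc ∫⁻ r, g₁ r ^ p ∂μ = ((∫⁻ r, g₁ r ^ p ∂μ) ^ (1 / p)) ^ p := by
          rw [← ENNReal.rpow_mul, one_div_mul_cancel hp0.ne', ENNReal.rpow_one]
      _ ≤ S ^ p := by
          gcongr
          exact le_self_add
  have h2 : ∫⁻ r, g₂ r ^ p ∂μ ≤ S ^ p := by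
    have h3 := ENNReal.lintegral_Lp_add_le m₁ m₃ hp
    calc ∫⁻ r, g₂ r ^ p ∂μ ≤ ∫⁻ r, (g₁ + g₃) r ^ p ∂μ := by
          refine lintegral_mono fun r => ?_
          exact ENNReal.rpow_le_rpow (h r) hp0.le
      _ = ((∫⁻ r, (g₁ + g₃) r ^ p ∂μ) ^ (1 / p)) ^ p := by
          rw [← ENNReal.rpow_mul, one_div_mul_cancel hp0.ne', ENNReal.rpow_one]
      _ ≤ S ^ p := by
          gcongr
  calc _ ≤ (2 * S ^ p) ^ (1 / p) := by
        rw [two_mul]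
        gcongr
    _ = _ := by
        rw [ENNReal.mul_rpow_of_nonneg _ _ (by positivity), ← ENNReal.rpow_mul,
          mul_one_div_cancel hp0.ne', ENNReal.rpow_one]

lemma setLIntegral_Ioc_shift (g : ℝ → ℝ≥0∞) (a b h : ℝ) :
    ∫⁻ r in Set.Ioc (a + h) (b + h), g r = ∫⁻ r in Set.Ioc a b, g (r + h) := by
  have := (measurePreserving_add_right volume h).setLIntegral_comp_preimage_emb
    (Homeomorph.addRight h).measurableEmbedding g (Set.Ioc (a + h) (b + h))
  rw [← this]
  simp

lemma setLIntegral_Ioc_split (g : ℝ → ℝ≥0∞) {a b c : ℝ} (hab : a ≤ b) (hbc : b ≤ c) :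
    ∫⁻ r in Set.Ioc a c, g r = (∫⁻ r in Set.Ioc a b, g r) + ∫⁻ r in Set.Ioc b c, g r := by
  rw [← Set.Ioc_union_Ioc_eq_Ioc hab hbc]
  exact lintegral_union measurableSet_Ioc (Set.Ioc_disjoint_Ioc_of_le (le_refl b))

section

variable {E : Type*} [PseudoEMetricSpace E]

lemma nik_increment_le (f : ℝ → E) {δ p s t h a b : ℝ} (hp : 0 < p) (hh : 0 < h)
    (ha : s ≤ a) (hb : b + h ≤ t) (hst : h ≤ t - s) :
    (∫⁻ r in Set.Ioc a b, edist (f r) (f (r + h)) ^ p) ^ (1 / p)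
      ≤ nikNorm f δ p s t * ENNReal.ofReal h ^ δ := by
  have h0 : ENNReal.ofReal h ≠ 0 := by simpa using hh
  have h1 : ENNReal.ofReal h ^ (-δ) *
      (∫⁻ r in Set.Ioc s (t - h), edist (f r) (f (r + h)) ^ p) ^ (1 / p) ≤ nikNorm f δ p s t :=
    le_iSup₂_of_le (f := fun (h : ℝ) (_ : 0 < h ∧ h ≤ t - s) => ENNReal.ofReal h ^ (-δ) *
      (∫⁻ r in Set.Ioc s (t - h), edist (f r) (f (r + h)) ^ p) ^ (1 / p)) h ⟨hh, hst⟩ le_rfl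
  calc (∫⁻ r in Set.Ioc a b, edist (f r) (f (r + h)) ^ p) ^ (1 / p)
      ≤ (∫⁻ r in Set.Ioc s (t - h), edist (f r) (f (r + h)) ^ p) ^ (1 / p) := by
        gcongr
        linarith
    _ = (ENNReal.ofReal h ^ (-δ) *
          (∫⁻ r in Set.Ioc s (t - h), edist (f r) (f (r + h)) ^ p) ^ (1 / p))
          * ENNReal.ofReal h ^ δ := by
        rw [mul_right_comm, ← ENNReal.rpow_add _ _ h0 ENNReal.ofReal_ne_top]
        simp
    _ ≤ _ := by gcongr

lemma aemeasurable_edist_const {f : ℝ → E} {s t : ℝ} (hf : ContinuousOn f (Set.Icc s t)) (x : E)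
    {a b : ℝ} (ha : s ≤ a) (hb : b ≤ t) :
    AEMeasurable (fun r => edist (f r) x) (volume.restrict (Set.Ioc a b)) := by
  refine ContinuousOn.aemeasurable ?_ measurableSet_Ioc
  have hsub : Set.Ioc a b ⊆ Set.Icc s t := fun r hr => ⟨ha.trans hr.1.le, hr.2.trans hb⟩
  exact continuous_edist.comp_continuousOn ((hf.mono hsub).prodMk continuousOn_const)

lemma aemeasurable_edist_shift {f : ℝ → E} {s t : ℝ} (hf : ContinuousOn f (Set.Icc s t))
    {a b h : ℝ} (hh : 0 ≤ h) (ha : s ≤ a) (hb : b + h ≤ t) :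
    AEMeasurable (fun r => edist (f r) (f (r + h))) (volume.restrict (Set.Ioc a b)) := by
  refine ContinuousOn.aemeasurable ?_ measurableSet_Ioc
  have h₁ : ContinuousOn f (Set.Ioc a b) :=
    hf.mono fun r hr => ⟨ha.trans hr.1.le, by linarith [hr.2]⟩
  have h₂ : ContinuousOn (fun r => f (r + h)) (Set.Ioc a b) :=
    hf.comp (by fun_prop) fun r hr => ⟨by linarith [hr.1], by linarith [hr.2]⟩
  exact continuous_edist.comp_continuousOn (h₁.prodMk h₂)

lemma Lp_le_of_le {g : ℝ → ℝ≥0∞} {p a b : ℝ} (hp : 0 < p) {ε : ℝ≥0∞}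
    (h : ∀ r ∈ Set.Ioc a b, g r ≤ ε) :
    (∫⁻ r in Set.Ioc a b, g r ^ p) ^ (1 / p) ≤ ε * ENNReal.ofReal (b - a) ^ (1 / p) := by
  calc (∫⁻ r in Set.Ioc a b, g r ^ p) ^ (1 / p)
      ≤ (∫⁻ _ in Set.Ioc a b, ε ^ p) ^ (1 / p) := by
        refine ENNReal.rpow_le_rpow (setLIntegral_mono' measurableSet_Ioc fun r hr => ?_)
          (by positivity)
        exact ENNReal.rpow_le_rpow (h r hr) hp.le
    _ = _ := by
        rw [setLIntegral_const, Real.volume_Ioc, ENNReal.mul_rpow_of_nonneg _ _ (by positivity),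
          ← ENNReal.rpow_mul, mul_one_div_cancel hp.ne', ENNReal.rpow_one]

lemma exists_edist_le {f : ℝ → E} {s t x : ℝ} (hf : ContinuousOn f (Set.Icc s t))
    (hx : x ∈ Set.Icc s t) {ε : ℝ≥0∞} (hε : 0 < ε) :
    ∃ η > 0, ∀ r ∈ Set.Icc s t, |r - x| < η → edist (f r) (f x) ≤ ε := by
  have h := EMetric.tendsto_nhds.1 (hf x hx) ε hε
  obtain ⟨η, hη, H⟩ := Metric.mem_nhdsWithin_iff.1 h
  exact ⟨η, hη, fun r hr hd => le_of_lt (H ⟨by simpa [Real.dist_eq] using hd, hr⟩)⟩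

/-- `(s, s + 2h]` is `(s, s + h]` together with its translate by `h`. -/
lemma left_Lp_le {f : ℝ → E} {δ p s t : ℝ} (hδ : 0 ≤ δ) (hp : 1 ≤ p) (hst : s < t)
    (hf : ContinuousOn f (Set.Icc s t)) :
    (∫⁻ r in Set.Ioc s t, edist (f r) (f s) ^ p) ^ (1 / p)
      ≤ nikNorm f δ p s t * ENNReal.ofReal (t - s) ^ δ * dyadicConst δ p := by
  have hp0 : 0 < p := by linarith
  have key := dyadic_iteration hp0 hδ
    (fun h => (∫⁻ r in Set.Ioc s (s + h), edist (f r) (f s) ^ p) ^ (1 / p))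
    (nikNorm f δ p s t) (sub_pos.2 hst) ?_ ?_
  · simpa using key
  · intro h hh h2
    rw [setLIntegral_Ioc_split _ (show s ≤ s + h by linarith)
      (show s + h ≤ s + 2 * h by linarith), show s + 2 * h = s + h + h by ring,
      setLIntegral_Ioc_shift]
    have hm := minkowski_two hp (g₂ := fun r => edist (f (r + h)) (f s))
      (aemeasurable_edist_const hf (f s) le_rfl (show s + h ≤ t by linarith))
      (aemeasurable_edist_shift hf hh.le le_rfl (show s + h + h ≤ t by linarith)) fun r => by
        rw [add_comm (edist _ _), edist_comm (f r) (f (r + h))]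
        exact edist_triangle _ _ _
    · refine hm.trans ?_
      gcongr
      exact nik_increment_le f hp0 hh le_rfl (by linarith) (by linarith)
  · intro ε hε
    obtain ⟨η, hη, H⟩ := exists_edist_le hf (Set.left_mem_Icc.2 hst.le) hε
    refine ⟨min η (t - s), lt_min hη (sub_pos.2 hst), fun h hh hlt => ?_⟩
    have h1 := hlt.trans_le (min_le_left _ _)
    have h2 := hlt.trans_le (min_le_right _ _)
    refine (Lp_le_of_le hp0 fun r hr => H r ⟨hr.1.le, by linarith [hr.2]⟩ ?_).trans_eq (by simp)
    rw [abs_lt]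
    constructor <;> linarith [hr.1, hr.2]

/-- Mirror image of `left_Lp_le`; here the half near `t` is the translate of the far half. -/
lemma right_Lp_le {f : ℝ → E} {δ p s t : ℝ} (hδ : 0 ≤ δ) (hp : 1 ≤ p) (hst : s < t)
    (hf : ContinuousOn f (Set.Icc s t)) :
    (∫⁻ r in Set.Ioc s t, edist (f r) (f t) ^ p) ^ (1 / p)
      ≤ nikNorm f δ p s t * ENNReal.ofReal (t - s) ^ δ * dyadicConst δ p := by
  have hp0 : 0 < p := by linarith
  have key := dyadic_iteration hp0 hδ
    (fun h => (∫⁻ r in Set.Ioc (t - h) t, edist (f r) (f t) ^ p) ^ (1 / p))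
    (nikNorm f δ p s t) (sub_pos.2 hst) ?_ ?_
  · simpa using key
  · intro h hh h2
    have hsh := setLIntegral_Ioc_shift (fun r => edist (f r) (f t) ^ p) (t - 2 * h) (t - h) h
    rw [show t - 2 * h + h = t - h by ring, show t - h + h = t by ring] at hsh
    rw [setLIntegral_Ioc_split _ (show t - 2 * h ≤ t - h by linarith)
      (show t - h ≤ t by linarith), hsh, add_comm (∫⁻ r in Set.Ioc (t - 2 * h) (t - h), _)]
    refine (minkowski_two hp (g₁ := fun r => edist (f (r + h)) (f t))
      (g₂ := fun r => edist (f r) (f t)) ?_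
      (aemeasurable_edist_shift hf hh.le (by linarith) (by linarith)) fun r => ?_).trans ?_
    · refine ContinuousOn.aemeasurable ?_ measurableSet_Ioc
      have h₂ : ContinuousOn (fun r => f (r + h)) (Set.Ioc (t - 2 * h) (t - h)) :=
        hf.comp (by fun_prop) fun r hr => ⟨by linarith [hr.1], by linarith [hr.2]⟩
      exact continuous_edist.comp_continuousOn (h₂.prodMk continuousOn_const)
    · rw [add_comm (edist _ _)]
      exact edist_triangle _ _ _
    · gcongr
      exact nik_increment_le f hp0 hh (by linarith) (by linarith) (by linarith)
  · intro ε hε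
    obtain ⟨η, hη, H⟩ := exists_edist_le hf (Set.right_mem_Icc.2 hst.le) hε
    refine ⟨min η (t - s), lt_min hη (sub_pos.2 hst), fun h hh hlt => ?_⟩
    have h1 := hlt.trans_le (min_le_left _ _)
    have h2 := hlt.trans_le (min_le_right _ _)
    refine (Lp_le_of_le hp0 fun r hr => H r ⟨by linarith [hr.1], hr.2⟩ ?_).trans_eq (by simp)
    rw [abs_lt]
    constructor <;> linarith [hr.1, hr.2]

/-- The Nikolskii space embeds into the Hölder space of exponent `δ - 1 / p`, locally on each
interval. -/
lemma edist_le_nikNorm {f : ℝ → E} {δ p s t : ℝ} (hδ : 0 ≤ δ) (hp : 1 ≤ p) (hst : s < t)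
    (hf : ContinuousOn f (Set.Icc s t)) :
    edist (f s) (f t)
      ≤ 2 * dyadicConst δ p * nikNorm f δ p s t * ENNReal.ofReal (t - s) ^ (δ - 1 / p) := by
  have hp0 : 0 < p := by linarith
  have hL0 : ENNReal.ofReal (t - s) ≠ 0 := by simpa using hst
  have hLp0 : ENNReal.ofReal (t - s) ^ (1 / p) ≠ 0 := by
    simp [ENNReal.rpow_eq_zero_iff, not_le.2 hst]
  have hLpt : ENNReal.ofReal (t - s) ^ (1 / p) ≠ ⊤ :=
    ENNReal.rpow_ne_top_of_nonneg (by positivity) ENNReal.ofReal_ne_top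
  rw [ENNReal.rpow_sub _ _ hL0 ENNReal.ofReal_ne_top, ← mul_div_assoc,
    ENNReal.le_div_iff_mul_le (Or.inl hLp0) (Or.inl hLpt)]
  calc edist (f s) (f t) * ENNReal.ofReal (t - s) ^ (1 / p)
      = (∫⁻ _ in Set.Ioc s t, edist (f s) (f t) ^ p) ^ (1 / p) := by
        rw [setLIntegral_const, Real.volume_Ioc, ENNReal.mul_rpow_of_nonneg _ _ (by positivity),
          ← ENNReal.rpow_mul, mul_one_div_cancel hp0.ne', ENNReal.rpow_one]
    _ ≤ (∫⁻ r in Set.Ioc s t,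
          ((fun r => edist (f r) (f s)) + fun r => edist (f r) (f t)) r ^ p) ^ (1 / p) := by
        gcongr with r
        simp only [Pi.add_apply]
        rw [edist_comm (f r) (f s)]
        exact edist_triangle _ _ _
    _ ≤ _ := ENNReal.lintegral_Lp_add_le (aemeasurable_edist_const hf _ le_rfl le_rfl)
        (aemeasurable_edist_const hf _ le_rfl le_rfl) hp
    _ ≤ _ := add_le_add (left_Lp_le hδ hp hst hf) (right_Lp_le hδ hp hst hf)
    _ = _ := by ring

/-! ### Partitions and super-additivity -/

lemma IsPart.mono {s t : ℝ} {n : ℕ} {u : ℕ → ℝ} (h : IsPart s t n u) {i j : ℕ} (hij : i ≤ j)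
    (hj : j ≤ n) : u i ≤ u j := by
  induction j, hij using Nat.le_induction with
  | base => exact le_rfl
  | succ k _ ih => exact (ih (by omega)).trans (h.2.2 k (by omega)).le

lemma IsPart.Icc_subset {s t : ℝ} {n : ℕ} {u : ℕ → ℝ} (h : IsPart s t n u) {i : ℕ} (hi : i < n) :
    Set.Icc (u i) (u (i + 1)) ⊆ Set.Icc s t := by
  refine Set.Icc_subset_Icc ?_ ?_
  · rw [← h.1]; exact h.mono (Nat.zero_le _) hi.le
  · rw [← h.2.1]; exact h.mono (Nat.succ_le_of_lt hi) le_rfl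

/-- The supremum over partitions of the sums of `nikNorm ^ p`, i.e. the `p`-th power of
`nikHatNorm`. -/
noncomputable def nikHatPow (f : ℝ → E) (δ p s t : ℝ) : ℝ≥0∞ :=
  ⨆ n, ⨆ u, ⨆ _ : IsPart s t n u,
    ∑ i ∈ Finset.range n, nikNorm f δ p (u i) (u (i + 1)) ^ p

lemma sum_le_nikHatPow (f : ℝ → E) (δ p : ℝ) {s t : ℝ} {n : ℕ} {u : ℕ → ℝ} (h : IsPart s t n u) :
    ∑ i ∈ Finset.range n, nikNorm f δ p (u i) (u (i + 1)) ^ p ≤ nikHatPow f δ p s t :=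
  le_iSup_of_le n (le_iSup₂_of_le u h le_rfl)

/-- Super-additivity, by concatenating partitions. -/
lemma nikHatPow_add_le (f : ℝ → E) (δ p : ℝ) {a b c : ℝ} (hab : a ≤ b) (hbc : b ≤ c) :
    nikHatPow f δ p a b + nikHatPow f δ p b c ≤ nikHatPow f δ p a c := by
  have trivialPart : ∀ {x y : ℝ}, x ≤ y → ∃ n u, IsPart x y n u := by
    intro x y hxy
    rcases hxy.eq_or_lt with rfl | hlt
    · exact ⟨0, fun _ => x, rfl, rfl, by simp⟩
    · refine ⟨1, fun i => if i = 0 then x else y, by simp, by simp, ?_⟩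
      intro i hi
      obtain rfl : i = 0 := by omega
      simpa using hlt
  have join : ∀ n u, IsPart a b n u → ∀ m v, IsPart b c m v →
      (∑ i ∈ Finset.range n, nikNorm f δ p (u i) (u (i + 1)) ^ p)
        + (∑ i ∈ Finset.range m, nikNorm f δ p (v i) (v (i + 1)) ^ p)
        ≤ nikHatPow f δ p a c := by
    intro n u hu m v hv
    set w : ℕ → ℝ := fun i => if i ≤ n then u i else v (i - n) with hw
    have w1 : ∀ i, i ≤ n → w i = u i := fun i hi => by simp [hw, hi]
    have w2 : ∀ i, w (n + i) = v i := by
      intro i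
      rcases Nat.eq_zero_or_pos i with rfl | hi
      · simp [hw, hu.2.1, hv.1]
      · have : ¬ n + i ≤ n := by omega
        simp only [hw, this, if_false]
        congr 1; omega
    have hwp : IsPart a c (n + m) w := by
      refine ⟨(w1 0 (Nat.zero_le _)).trans hu.1, (w2 m).trans hv.2.1, fun i hi => ?_⟩
      rcases lt_or_ge i n with h | h
      · rw [w1 i h.le, w1 (i + 1) h]
        exact hu.2.2 i h
      · obtain ⟨j, rfl⟩ := Nat.exists_eq_add_of_le h
        rw [w2 j, add_assoc, w2 (j + 1)]
        exact hv.2.2 j (by omega)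
    refine le_trans (le_of_eq ?_) (sum_le_nikHatPow f δ p hwp)
    rw [Finset.sum_range_add]
    congr 1
    · refine Finset.sum_congr rfl fun i hi => ?_
      have hi := Finset.mem_range.1 hi
      rw [w1 i hi.le, w1 (i + 1) hi]
    · refine Finset.sum_congr rfl fun i _ => ?_
      rw [add_assoc, w2 i, w2 (i + 1)]
  obtain ⟨n₀, u₀, h₀⟩ := trivialPart hab
  obtain ⟨m₀, v₀, k₀⟩ := trivialPart hbc
  have e : ∀ x y, nikHatPow f δ p x y = ⨆ q : {q : ℕ × (ℕ → ℝ) // IsPart x y q.1 q.2},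
      ∑ i ∈ Finset.range q.1.1, nikNorm f δ p (q.1.2 i) (q.1.2 (i + 1)) ^ p := by
    intro x y
    rw [iSup_subtype, iSup_prod]
    rfl
  have : Nonempty {q : ℕ × (ℕ → ℝ) // IsPart a b q.1 q.2} := ⟨⟨(n₀, u₀), h₀⟩⟩
  have : Nonempty {q : ℕ × (ℕ → ℝ) // IsPart b c q.1 q.2} := ⟨⟨(m₀, v₀), k₀⟩⟩
  rw [e a b, e b c]
  exact ENNReal.iSup_add_iSup_le fun q₁ q₂ => join _ _ q₁.2 _ _ q₂.2

lemma sum_nikHatPow_le (f : ℝ → E) (δ p : ℝ) {s t : ℝ} {n : ℕ} {u : ℕ → ℝ}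
    (h : IsPart s t n u) :
    ∑ i ∈ Finset.range n, nikHatPow f δ p (u i) (u (i + 1)) ≤ nikHatPow f δ p s t := by
  have aux : ∀ k, k ≤ n →
      ∑ i ∈ Finset.range k, nikHatPow f δ p (u i) (u (i + 1)) ≤ nikHatPow f δ p s (u k) := by
    intro k
    induction k with
    | zero => simp
    | succ k ih =>
      intro hk
      rw [Finset.sum_range_succ]
      refine (add_le_add_left (ih (by omega)) _).trans (nikHatPow_add_le f δ p ?_ ?_)
      · rw [← h.1]; exact h.mono (Nat.zero_le _) (by omega)
      · exact (h.2.2 k (by omega)).le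
  simpa [h.2.1] using aux n le_rfl

/-! ### The variation estimate -/

/-- Hölder's inequality with exponents `δ p` and `δ p / (δ p - 1)`, after the bound
`edist_le_nikNorm` on each piece of the partition. -/
lemma qVar_rpow_le {f : ℝ → E} {δ p s t : ℝ} (hδ : 0 < δ) (hp : 1 < p) (hδp : 1 / p < δ)
    (hf : ContinuousOn f (Set.Icc s t)) :
    qVar f (1 / δ) s t ^ p
      ≤ (2 * dyadicConst δ p) ^ p * nikHatPow f δ p s t * ENNReal.ofReal (t - s) ^ (δ * p - 1) := by
  have hp0 : 0 < p := by linarith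
  have hδp1 : 1 < δ * p := by rwa [div_lt_iff₀ hp0] at hδp
  have hθ : 0 < δ - 1 / p := by linarith
  have hc : (δ * p).HolderConjugate (δ * p / (δ * p - 1)) :=
    Real.HolderConjugate.conjExponent hδp1
  set A := 2 * dyadicConst δ p with hA
  set W := nikHatPow f δ p s t with hW
  have hsum : (⨆ n, ⨆ u, ⨆ _ : IsPart s t n u,
      ∑ i ∈ Finset.range n, edist (f (u i)) (f (u (i + 1))) ^ (1 / δ))
      ≤ (A * W ^ (1 / p) * ENNReal.ofReal (t - s) ^ (δ - 1 / p)) ^ (1 / δ) := by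
    refine iSup_le fun n => iSup₂_le fun u hu => ?_
    have htel : ∑ i ∈ Finset.range n, ENNReal.ofReal (u (i + 1) - u i)
        = ENNReal.ofReal (t - s) := by
      rw [← ENNReal.ofReal_sum_of_nonneg, Finset.sum_range_sub, hu.1, hu.2.1]
      intro i hi
      exact (sub_pos.2 (hu.2.2 i (Finset.mem_range.1 hi))).le
    calc ∑ i ∈ Finset.range n, edist (f (u i)) (f (u (i + 1))) ^ (1 / δ)
        ≤ ∑ i ∈ Finset.range n, A ^ (1 / δ) * (nikNorm f δ p (u i) (u (i + 1)) ^ (1 / δ) *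
            ENNReal.ofReal (u (i + 1) - u i) ^ ((δ - 1 / p) * (1 / δ))) := by
          refine Finset.sum_le_sum fun i hi => ?_
          have hi := Finset.mem_range.1 hi
          rw [ENNReal.rpow_mul, ← ENNReal.mul_rpow_of_nonneg _ _ (by positivity),
            ← ENNReal.mul_rpow_of_nonneg _ _ (by positivity), ← mul_assoc]
          exact ENNReal.rpow_le_rpow (edist_le_nikNorm hδ.le hp.le (hu.2.2 i hi)
            (hf.mono (hu.Icc_subset hi))) (by positivity)
      _ = A ^ (1 / δ) * ∑ i ∈ Finset.range n, (nikNorm f δ p (u i) (u (i + 1)) ^ (1 / δ) *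
            ENNReal.ofReal (u (i + 1) - u i) ^ ((δ - 1 / p) * (1 / δ))) := by
          rw [Finset.mul_sum]
      _ ≤ A ^ (1 / δ) * ((∑ i ∈ Finset.range n,
              (nikNorm f δ p (u i) (u (i + 1)) ^ (1 / δ)) ^ (δ * p)) ^ (1 / (δ * p)) *
            (∑ i ∈ Finset.range n, (ENNReal.ofReal (u (i + 1) - u i) ^
              ((δ - 1 / p) * (1 / δ))) ^ (δ * p / (δ * p - 1))) ^
                (1 / (δ * p / (δ * p - 1)))) := by
          gcongr
          exact ENNReal.inner_le_Lp_mul_Lq _ _ _ hc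
      _ ≤ A ^ (1 / δ) * (W ^ (1 / (δ * p)) *
            ENNReal.ofReal (t - s) ^ (1 / (δ * p / (δ * p - 1)))) := by
          have e1 : 1 / δ * (δ * p) = p := by field_simp
          have hne : δ * p - 1 ≠ 0 := by linarith
          have e2 : (δ - 1 / p) * (1 / δ) * (δ * p / (δ * p - 1)) = 1 := by
            field_simp
          simp_rw [← ENNReal.rpow_mul, e1, e2, ENNReal.rpow_one, htel]
          gcongr
          exact sum_le_nikHatPow f δ p hu
      _ = _ := by
          rw [ENNReal.mul_rpow_of_nonneg (A * W ^ (1 / p)) _ (by positivity),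
            ENNReal.mul_rpow_of_nonneg A (W ^ (1 / p)) (by positivity), ← ENNReal.rpow_mul,
            ← ENNReal.rpow_mul, mul_assoc]
          have e1 : 1 / (δ * p) = 1 / p * (1 / δ) := by field_simp
          have e2 : 1 / (δ * p / (δ * p - 1)) = (δ - 1 / p) * (1 / δ) := by
            field_simp
          rw [e1, e2]
  calc qVar f (1 / δ) s t ^ p
      ≤ (((A * W ^ (1 / p) * ENNReal.ofReal (t - s) ^ (δ - 1 / p)) ^ (1 / δ))
          ^ (1 / (1 / δ))) ^ p := by
        unfold qVar
        gcongr
    _ = (A * W ^ (1 / p) * ENNReal.ofReal (t - s) ^ (δ - 1 / p)) ^ p := by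
        rw [← ENNReal.rpow_mul _ (1 / δ), mul_one_div_cancel (by positivity), ENNReal.rpow_one]
    _ = _ := by
        rw [ENNReal.mul_rpow_of_nonneg _ _ hp0.le, ENNReal.mul_rpow_of_nonneg _ _ hp0.le,
          ← ENNReal.rpow_mul, ← ENNReal.rpow_mul, one_div_mul_cancel hp0.ne', ENNReal.rpow_one,
          sub_mul, one_div_mul_cancel hp0.ne']

end

/-- the mixed Hölder-variation seminorm is bounded by the refined
Nikolskii seminorm. -/
theorem tildeVNorm_le_nikHatNorm {E : Type*} [PseudoEMetricSpace E] (δ p : ℝ)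
    (hδ : 0 < δ) (hδ1 : δ < 1) (hp : 1 < p) (hδp : 1 / p < δ) :
    ∃ C : ℝ, 0 < C ∧ ∀ (T : ℝ) (f : ℝ → E), 0 < T →
      ContinuousOn f (Set.Icc 0 T) →
      tildeVNorm f δ p 0 T ≤ ENNReal.ofReal C * nikHatNorm f δ p 0 T := by
  have hp0 : 0 < p := by linarith
  have hAt : 2 * dyadicConst δ p ≠ ⊤ :=
    ENNReal.mul_ne_top (by norm_num) (dyadicConst_ne_top hδp)
  refine ⟨(2 * dyadicConst δ p).toReal + 1, by positivity, fun T f _ hf => ?_⟩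
  have hAC : 2 * dyadicConst δ p ≤ ENNReal.ofReal ((2 * dyadicConst δ p).toReal + 1) := by
    rw [ENNReal.le_ofReal_iff_toReal_le hAt (by positivity)]
    linarith
  have hmain : (⨆ n, ⨆ u, ⨆ _ : IsPart 0 T n u, ∑ i ∈ Finset.range n,
      qVar f (1 / δ) (u i) (u (i + 1)) ^ p / ENNReal.ofReal (u (i + 1) - u i) ^ (δ * p - 1))
      ≤ (2 * dyadicConst δ p) ^ p * nikHatPow f δ p 0 T := by
    refine iSup_le fun n => iSup₂_le fun u hu => ?_
    calc _ ≤ ∑ i ∈ Finset.range n,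
          (2 * dyadicConst δ p) ^ p * nikHatPow f δ p (u i) (u (i + 1)) := by
          refine Finset.sum_le_sum fun i hi => ?_
          have hi := Finset.mem_range.1 hi
          exact ENNReal.div_le_of_le_mul
            (qVar_rpow_le hδ hp hδp (hf.mono (hu.Icc_subset hi)))
      _ ≤ _ := by
          rw [← Finset.mul_sum]
          gcongr
          exact sum_nikHatPow_le f δ p hu
  calc tildeVNorm f δ p 0 T
      ≤ ((2 * dyadicConst δ p) ^ p * nikHatPow f δ p 0 T) ^ (1 / p) := by
        unfold tildeVNorm
        gcongr
    _ = 2 * dyadicConst δ p * nikHatNorm f δ p 0 T := by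
        rw [ENNReal.mul_rpow_of_nonneg _ _ (by positivity), ← ENNReal.rpow_mul,
          mul_one_div_cancel hp0.ne', ENNReal.rpow_one]
        rfl
    _ ≤ _ := by gcongr
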